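/- arXiv:2306.01871 — 7 statements merged into one kernel-verified Lean document; each statement's English description precedes it below -/
import Mathlib

section
/- Let t₀ < t_f, let v : ℝ → ℝ be differentiable on [t₀, t_f] with control u = v', let v_max ∈ ℝ and k₃ > 0. If −u(t) + k₃·( v_max − v(t) ) ≥ 0 for all t ∈ [t₀, t_f] and v(t₀) ≤ v_max, then v(t) ≤ v_max for all t ∈ [t₀, t_f]. -/
/-- Maximum speed constraint via the CBF `b₃ = v_max − v`. -/
theorem stmt_5 (t₀ tf : ℝ) (ht : t₀ < tf)
    (v u : ℝ → ℝ) (vmax k₃ : ℝ) (hk₃ : 0 < k₃)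
    (hv : ∀ t ∈ Set.Icc t₀ tf, HasDerivAt v (u t) t)
    (hcbf : ∀ t ∈ Set.Icc t₀ tf, -u t + k₃ * (vmax - v t) ≥ 0)
    (h0 : v t₀ ≤ vmax) :
    ∀ t ∈ Set.Icc t₀ tf, v t ≤ vmax := by
  have hg : ∀ t ∈ Set.Icc t₀ tf, HasDerivAt (fun s => (vmax - v s) * Real.exp (k₃ * s))
      ((-u t + k₃ * (vmax - v t)) * Real.exp (k₃ * t)) t := by
    intro t h
    have h1 := (hv t h).const_sub vmax
    have h2 : HasDerivAt (fun s => Real.exp (k₃ * s)) (Real.exp (k₃ * t) * (k₃ * 1)) t :=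
      ((hasDerivAt_id t).const_mul k₃).exp
    exact (h1.mul h2).congr_deriv (by ring)
  have hm : MonotoneOn (fun s => (vmax - v s) * Real.exp (k₃ * s)) (Set.Icc t₀ tf) := by
    apply monotoneOn_of_deriv_nonneg (convex_Icc _ _)
    · exact fun t h => (hg t h).continuousAt.continuousWithinAt
    · exact fun t h => (hg t (interior_subset h)).differentiableAt.differentiableWithinAt
    · intro t h
      rw [(hg t (interior_subset h)).deriv]
      exact mul_nonneg (hcbf t (interior_subset h)) (Real.exp_pos _).le
  intro t h
  have h1 := hm (Set.left_mem_Icc.2 ht.le) h h.1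
  have h2 : 0 ≤ (vmax - v t₀) * Real.exp (k₃ * t₀) :=
    mul_nonneg (sub_nonneg.2 h0) (Real.exp_pos _).le
  exact sub_nonneg.1 (nonneg_of_mul_nonneg_left (h2.trans h1) (Real.exp_pos _))
end

section
/- Let t₀ < t_f, let v : ℝ → ℝ be differentiable on [t₀, t_f] with control u = v', let v_min ∈ ℝ and k₄ > 0. If u(t) + k₄·( v(t) − v_min ) ≥ 0 for all t ∈ [t₀, t_f] and v(t₀) ≥ v_min, then v(t) ≥ v_min for all t ∈ [t₀, t_f]. -/
/-- Minimum speed constraint via the CBF `b₄ = v − v_min`. -/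
theorem stmt_6 (t₀ tf : ℝ) (ht : t₀ < tf)
    (v u : ℝ → ℝ) (vmin k₄ : ℝ) (hk₄ : 0 < k₄)
    (hv : ∀ t ∈ Set.Icc t₀ tf, HasDerivAt v (u t) t)
    (hcbf : ∀ t ∈ Set.Icc t₀ tf, u t + k₄ * (v t - vmin) ≥ 0)
    (h0 : v t₀ ≥ vmin) :
    ∀ t ∈ Set.Icc t₀ tf, v t ≥ vmin := by
  have hd : ∀ t ∈ Set.Icc t₀ tf, HasDerivAt (fun s => Real.exp (k₄ * s) * (v s - vmin))
      (Real.exp (k₄ * t) * (u t + k₄ * (v t - vmin))) t := by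
    intro t h
    have h1 : HasDerivAt (fun s : ℝ => Real.exp (k₄ * s)) (Real.exp (k₄ * t) * (k₄ * 1)) t :=
      ((hasDerivAt_id t).const_mul k₄).exp
    have h2 := h1.mul ((hv t h).sub_const vmin)
    refine h2.congr_deriv ?_
    ring
  have hm : MonotoneOn (fun s => Real.exp (k₄ * s) * (v s - vmin)) (Set.Icc t₀ tf) := by
    apply monotoneOn_of_deriv_nonneg (convex_Icc t₀ tf)
    · exact fun t h => (hd t h).continuousAt.continuousWithinAt
    · exact fun t h => (hd t (interior_subset h)).differentiableAt.differentiableWithinAt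
    · intro t h
      rw [(hd t (interior_subset h)).deriv]
      exact mul_nonneg (Real.exp_pos _).le (hcbf t (interior_subset h))
  intro t h
  have h3 := hm (Set.left_mem_Icc.2 ht.le) h h.1
  have h4 : 0 ≤ Real.exp (k₄ * t₀) * (v t₀ - vmin) :=
    mul_nonneg (Real.exp_pos _).le (sub_nonneg.2 h0)
  have h5 : 0 ≤ Real.exp (k₄ * t) * (v t - vmin) := le_trans h4 h3
  exact sub_nonneg.1 (nonneg_of_mul_nonneg_right h5 (Real.exp_pos _))
end

section
/- Let n ≥ 1, let S̄ ⊆ ℝⁿ be a nonempty compact set, let b, F, G : ℝⁿ → ℝ be continuous, let k > 0 and let u ∈ ℝ be a constant control. Let t_k < t_{k+1} and let x : [t_k, t_{k+1}] → ℝ^n be a trajectory such that x(t) ∈ S̄ for all t ∈ [t_k, t_{k+1}] and t ↦ b(x(t)) is differentiable with derivative d/dt b(x(t)) = F(x(t)) + G(x(t))·u. Define b_f^min := min_{y ∈ S̄} F(y), b_γ^min := min_{y ∈ S̄} k·b(y), and b_g^min := min_{y ∈ S̄} G(y) if u ≥ 0 and b_g^min := max_{y ∈ S̄} G(y) if u <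 0. If b(x(t_k)) ≥ 0 and the event-triggered condition b_f^min + b_g^min·u + b_γ^min ≥ 0 holds, then b(x(t)) ≥ 0 for all t ∈ [t_k, t_{k+1}]. -/
/-- Event-triggered CBF scheme (Theorem 1 with linear class-K function):
if the worst-case CBF condition over the compact set `S̄` holds for the constant
control `u` and `b(x(t_k)) ≥ 0`, then `b(x(t)) ≥ 0` on the inter-event interval. -/
theorem stmt_8 (n : ℕ) (hn : 1 ≤ n) (Sbar : Set (Fin n → ℝ))
    (hne : Sbar.Nonempty) (hcpt : IsCompact Sbar)
    (b F G : (Fin n → ℝ) → ℝ)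
    (hb : Continuous b) (hF : Continuous F) (hG : Continuous G)
    (k u : ℝ) (hk : 0 < k)
    (tk tk1 : ℝ) (ht : tk < tk1)
    (x : ℝ → (Fin n → ℝ))
    (hx : ∀ t ∈ Set.Icc tk tk1, x t ∈ Sbar)
    (hderiv : ∀ t ∈ Set.Icc tk tk1,
      HasDerivAt (fun s => b (x s)) (F (x t) + G (x t) * u) t)
    (bfmin bγmin bgmin : ℝ)
    (hbf : bfmin = sInf (F '' Sbar))
    (hbγ : bγmin = sInf ((fun y => k * b y) '' Sbar))
    (hbg : bgmin = if 0 ≤ u then sInf (G '' Sbar) else sSup (G '' Sbar))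
    (h0 : 0 ≤ b (x tk))
    (hcond : bfmin + bgmin * u + bγmin ≥ 0) :
    ∀ t ∈ Set.Icc tk tk1, 0 ≤ b (x t) := by
  have key : ∀ t ∈ Set.Icc tk tk1, 0 ≤ F (x t) + G (x t) * u + k * b (x t) := by
    intro t htt
    have hxt := hx t htt
    have h1 : bfmin ≤ F (x t) := by
      rw [hbf]
      exact csInf_le (hcpt.image hF).bddBelow ⟨x t, hxt, rfl⟩
    have h2 : bγmin ≤ k * b (x t) := by
      rw [hbγ]
      exact csInf_le (hcpt.image (continuous_const.mul hb)).bddBelow ⟨x t, hxt, rfl⟩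
    have h3 : bgmin * u ≤ G (x t) * u := by
      rw [hbg]
      split_ifs with hu
      · exact mul_le_mul_of_nonneg_right
          (csInf_le (hcpt.image hG).bddBelow ⟨x t, hxt, rfl⟩) hu
      · exact mul_le_mul_of_nonpos_right
          (le_csSup (hcpt.image hG).bddAbove ⟨x t, hxt, rfl⟩) (not_le.mp hu).le
    linarith
  have hd : ∀ t ∈ Set.Icc tk tk1, HasDerivAt (fun s => Real.exp (k * s) * b (x s))
      (Real.exp (k * t) * (F (x t) + G (x t) * u + k * b (x t))) t := by
    intro t htt
    have he : HasDerivAt (fun s : ℝ => Real.exp (k * s)) (Real.exp (k * t) * (k * 1)) t :=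
      ((hasDerivAt_id t).const_mul k).exp
    refine (he.mul (hderiv t htt)).congr_deriv ?_
    ring
  have hmono : MonotoneOn (fun s => Real.exp (k * s) * b (x s)) (Set.Icc tk tk1) := by
    refine monotoneOn_of_deriv_nonneg (convex_Icc _ _)
      (fun t htt => (hd t htt).continuousAt.continuousWithinAt)
      (fun t htt => (hd t (interior_subset htt)).differentiableAt.differentiableWithinAt) ?_
    intro t htt
    rw [(hd t (interior_subset htt)).deriv]
    exact mul_nonneg (Real.exp_pos _).le (key t (interior_subset htt))
  intro t htt
  have h4 : Real.exp (k * tk) * b (x tk) ≤ Real.exp (k * t) * b (x t) :=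
    hmono (Set.left_mem_Icc.mpr ht.le) htt htt.1
  have h5 : 0 ≤ Real.exp (k * t) * b (x t) :=
    le_trans (mul_nonneg (Real.exp_pos _).le h0) h4
  exact nonneg_of_mul_nonneg_right h5 (Real.exp_pos _)
end

section
/- Let t_k < t_{k+1}, let x_i, x_p : ℝ → ℝ be twice differentiable on [t_k, t_{k+1}] with velocities v_i = x_i', v_p = x_p', suppose the control of CAV i is constant on the interval: v_i'(t) = u_i for all t ∈ [t_k, t_{k+1}], and let φ > 0, δ > 0, k₁ > 0 and box half-widths s_x ≥ 0, s_v ≥ 0. Assume: (i) |x_i(t) − x_i(t_k)| ≤ s_x, |v_i(t) − v_i(t_k)| ≤ s_v, |x_p(t) − x_p(t_k)| ≤ s_x and |v_p(t) − v_p(t_k)| ≤ s_v for all t in the interval; (ii) x_p(t_k) − x_i(t_k) − φ·v_i(t_k) − δ ≥ 0; and (iii) the event-triggered condition ( v_p(t_k) − s_v ) − ( v_i(t_k) + s_v ) − φ·u_i + k₁·( (x_p(t_k) − s_x) − (x_i(t_k) + s_x) − φ·(v_i(t_k) + s_v) − δ ) ≥ 0. Then the rear-end safety barrier b₁(t) =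 x_p(t) − x_i(t) − φ·v_i(t) − δ satisfies b₁(t) ≥ 0 for all t ∈ [t_k, t_{k+1}], i.e., x_p(t) − x_i(t) ≥ φ·v_i(t) + δ throughout the inter-event interval. -/
/-- Event-triggered rear-end safety: if the states stay in boxes of half-widths
`(s_x, s_v)` around their values at the event time `t_k`, the barrier is
nonnegative at `t_k`, and the worst-case (event-triggered) CBF condition holds,
then rear-end safety holds throughout the inter-event interval. -/
theorem stmt_9 (tk tk1 : ℝ) (ht : tk < tk1)
    (xi xp vi vp : ℝ → ℝ) (ui : ℝ) (φ δ k₁ sx sv : ℝ)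
    (hφ : 0 < φ) (hδ : 0 < δ) (hk₁ : 0 < k₁) (hsx : 0 ≤ sx) (hsv : 0 ≤ sv)
    (hxi : ∀ t ∈ Set.Icc tk tk1, HasDerivAt xi (vi t) t)
    (hxp : ∀ t ∈ Set.Icc tk tk1, HasDerivAt xp (vp t) t)
    (hvi : ∀ t ∈ Set.Icc tk tk1, HasDerivAt vi ui t)
    (hboxxi : ∀ t ∈ Set.Icc tk tk1, |xi t - xi tk| ≤ sx)
    (hboxvi : ∀ t ∈ Set.Icc tk tk1, |vi t - vi tk| ≤ sv)
    (hboxxp : ∀ t ∈ Set.Icc tk tk1, |xp t - xp tk| ≤ sx)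
    (hboxvp : ∀ t ∈ Set.Icc tk tk1, |vp t - vp tk| ≤ sv)
    (h0 : xp tk - xi tk - φ * vi tk - δ ≥ 0)
    (hcond : (vp tk - sv) - (vi tk + sv) - φ * ui
      + k₁ * ((xp tk - sx) - (xi tk + sx) - φ * (vi tk + sv) - δ) ≥ 0) :
    ∀ t ∈ Set.Icc tk tk1, xp t - xi t ≥ φ * vi t + δ := by
  have hd : ∀ t ∈ Set.Icc tk tk1,
      HasDerivAt (fun s => Real.exp (k₁ * s) * (xp s - xi s - φ * vi s - δ))
        (Real.exp (k₁ * t) * (k₁ * 1) * (xp t - xi t - φ * vi t - δ)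
          + Real.exp (k₁ * t) * (vp t - vi t - φ * ui)) t := by
    intro t h
    exact (((hasDerivAt_id' t).const_mul k₁).exp).mul
      ((((hxp t h).sub (hxi t h)).sub ((hvi t h).const_mul φ)).sub_const δ)
  have hmono : MonotoneOn (fun s => Real.exp (k₁ * s) * (xp s - xi s - φ * vi s - δ))
      (Set.Icc tk tk1) := by
    refine monotoneOn_of_deriv_nonneg (convex_Icc tk tk1)
      (fun t h => (hd t h).continuousAt.continuousWithinAt)
      (fun t h => (hd t (interior_subset h)).differentiableAt.differentiableWithinAt) ?_
    intro t h
    have h := interior_subset h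
    rw [(hd t h).deriv]
    have h1 := abs_le.1 (hboxxi t h)
    have h2 := abs_le.1 (hboxvi t h)
    have h3 := abs_le.1 (hboxxp t h)
    have h4 := abs_le.1 (hboxvp t h)
    have h5 : φ * vi t ≤ φ * (vi tk + sv) :=
      mul_le_mul_of_nonneg_left (by linarith) hφ.le
    have h6 : k₁ * ((xp tk - sx) - (xi tk + sx) - φ * (vi tk + sv) - δ)
        ≤ k₁ * (xp t - xi t - φ * vi t - δ) :=
      mul_le_mul_of_nonneg_left (by linarith) hk₁.le
    have h7 : 0 ≤ Real.exp (k₁ * t) *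
        (k₁ * (xp t - xi t - φ * vi t - δ) + (vp t - vi t - φ * ui)) :=
      mul_nonneg (Real.exp_pos _).le (by linarith)
    linarith
  intro t h
  have h1 := hmono (Set.left_mem_Icc.2 ht.le) h h.1
  have h2 : 0 ≤ Real.exp (k₁ * t) * (xp t - xi t - φ * vi t - δ) :=
    le_trans (mul_nonneg (Real.exp_pos _).le h0) h1
  have h3 := nonneg_of_mul_nonneg_right h2 (Real.exp_pos _)
  linarith
end

section
/- Let t_k < t_{k+1}, let x_i, x_c : ℝ → ℝ be twice differentiable on [t_k, t_{k+1}] with velocities v_i = x_i', v_c = x_c', suppose the control of CAV i is constant on the interval: v_i'(t) = u_i for all t ∈ [t_k, t_{k+1}], and let φ > 0, δ > 0, L > 0, k₂ > 0 and box half-widths s_x ≥ 0, s_v ≥ 0 with x_i(t_k) − s_x ≥ 0 and v_i(t_k) − s_v ≥ 0. Assume: (i) |x_i(t) − x_i(t_k)| ≤ s_x, |v_i(t) − v_i(t_k)| ≤ s_v, |x_c(t) − x_c(t_k)| ≤ s_x and |v_c(t) − v_c(t_k)| ≤ s_v for all t in the interval; (ii) x_c(t_k) − x_i(t_k) − (φ·x_i(t_k)/L)·v_i(t_k)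 − δ ≥ 0; and (iii) the event-triggered condition ( v_c(t_k) − s_v ) − ( v_i(t_k) + s_v ) − (φ/L)·( v_i(t_k) + s_v )² + m·u_i + k₂·( (x_c(t_k) − s_x) − (x_i(t_k) + s_x) − (φ/L)·(x_i(t_k) + s_x)·(v_i(t_k) + s_v) − δ ) ≥ 0, where m := −(φ/L)·(x_i(t_k) + s_x) if u_i ≥ 0 and m := −(φ/L)·(x_i(t_k) − s_x) if u_i < 0. Then the safe-merging barrier b₂(t) = x_c(t) − x_i(t) − (φ·x_i(t)/L)·v_i(t) − δ satisfies b₂(t) ≥ 0 for all t ∈ [t_k, t_{k+1}]. -/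
/-- Event-triggered safe merging: under the worst-case (event-triggered)
merging CBF condition with sign-dependent control coefficient `m`, the safe
merging barrier remains nonnegative on the inter-event interval. -/
theorem stmt_10 (tk tk1 : ℝ) (ht : tk < tk1)
    (xi xc vi vc : ℝ → ℝ) (ui : ℝ) (φ δ L k₂ sx sv : ℝ)
    (hφ : 0 < φ) (hδ : 0 < δ) (hL : 0 < L) (hk₂ : 0 < k₂)
    (hsx : 0 ≤ sx) (hsv : 0 ≤ sv)
    (hxpos : xi tk - sx ≥ 0) (hvpos : vi tk - sv ≥ 0)
    (hxi : ∀ t ∈ Set.Icc tk tk1, HasDerivAt xi (vi t) t)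
    (hxc : ∀ t ∈ Set.Icc tk tk1, HasDerivAt xc (vc t) t)
    (hvi : ∀ t ∈ Set.Icc tk tk1, HasDerivAt vi ui t)
    (hboxxi : ∀ t ∈ Set.Icc tk tk1, |xi t - xi tk| ≤ sx)
    (hboxvi : ∀ t ∈ Set.Icc tk tk1, |vi t - vi tk| ≤ sv)
    (hboxxc : ∀ t ∈ Set.Icc tk tk1, |xc t - xc tk| ≤ sx)
    (hboxvc : ∀ t ∈ Set.Icc tk tk1, |vc t - vc tk| ≤ sv)
    (h0 : xc tk - xi tk - (φ * xi tk / L) * vi tk - δ ≥ 0)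
    (m : ℝ)
    (hm : m = if 0 ≤ ui then -(φ / L) * (xi tk + sx) else -(φ / L) * (xi tk - sx))
    (hcond : (vc tk - sv) - (vi tk + sv) - (φ / L) * (vi tk + sv) ^ 2 + m * ui
      + k₂ * ((xc tk - sx) - (xi tk + sx)
        - (φ / L) * (xi tk + sx) * (vi tk + sv) - δ) ≥ 0) :
    ∀ t ∈ Set.Icc tk tk1, xc t - xi t - (φ * xi t / L) * vi t - δ ≥ 0 := by
  have hc : 0 < φ / L := div_pos hφ hL
  generalize hcd : φ / L = c at *
  have e : ∀ t, φ * xi t / L = c * xi t := fun t => by rw [← hcd]; ring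
  simp only [e] at *
  have hd : ∀ t ∈ Set.Icc tk tk1, HasDerivAt
      (fun t => Real.exp (k₂ * t) * (xc t - xi t - c * xi t * vi t - δ))
      (Real.exp (k₂ * t) * ((vc t - vi t - (c * vi t * vi t + c * xi t * ui))
        + k₂ * (xc t - xi t - c * xi t * vi t - δ))) t := by
    intro t h
    have h1 : HasDerivAt (fun t => Real.exp (k₂ * t)) (Real.exp (k₂ * t) * (k₂ * 1)) t :=
      ((hasDerivAt_id t).const_mul k₂).exp
    have h2 := (((hxc t h).sub (hxi t h)).sub (((hxi t h).const_mul c).mul (hvi t h))).sub_const δ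
    exact (h1.mul h2).congr_deriv (by simp only [Pi.sub_apply, Pi.mul_apply]; ring)
  have hn : ∀ t ∈ Set.Icc tk tk1, 0 ≤ (vc t - vi t - (c * vi t * vi t + c * xi t * ui))
        + k₂ * (xc t - xi t - c * xi t * vi t - δ) := by
    intro t h
    obtain ⟨a1, a2⟩ := abs_le.1 (hboxxi t h)
    obtain ⟨b1, b2⟩ := abs_le.1 (hboxvi t h)
    obtain ⟨c1, c2⟩ := abs_le.1 (hboxxc t h)
    obtain ⟨d1, d2⟩ := abs_le.1 (hboxvc t h)
    have hx0 : 0 ≤ xi t := by linarith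
    have hv0 : 0 ≤ vi t := by linarith
    have hxu : xi t ≤ xi tk + sx := by linarith
    have hvu : vi t ≤ vi tk + sv := by linarith
    have hv1 : 0 ≤ vi tk + sv := by linarith
    have hx1 : 0 ≤ xi tk + sx := by linarith
    have p1 : c * (vi t * vi t) ≤ c * ((vi tk + sv) * (vi tk + sv)) := by gcongr
    have p2 : c * (xi t * vi t) ≤ c * ((xi tk + sx) * (vi tk + sv)) := by gcongr
    have p3 : m * ui ≤ -(c * (xi t * ui)) := by
      rw [hm]
      split_ifs with hu
      · have : c * (xi t * ui) ≤ c * ((xi tk + sx) * ui) := by gcongr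
        linarith
      · have : c * (xi t * ui) ≤ c * ((xi tk - sx) * ui) :=
          mul_le_mul_of_nonneg_left
            (mul_le_mul_of_nonpos_right (by linarith) (by linarith)) hc.le
        linarith
    have p4 : k₂ * ((xc tk - sx) - (xi tk + sx) - c * (xi tk + sx) * (vi tk + sv) - δ)
        ≤ k₂ * (xc t - xi t - c * xi t * vi t - δ) :=
      mul_le_mul_of_nonneg_left (by linarith) hk₂.le
    linarith
  have hmono := monotoneOn_of_deriv_nonneg (convex_Icc tk tk1)
    (fun t h => (hd t h).continuousAt.continuousWithinAt)
    (fun t h => (hd t (interior_subset h)).differentiableAt.differentiableWithinAt)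
    (fun t h => by
      rw [(hd t (interior_subset h)).deriv]
      exact mul_nonneg (Real.exp_pos _).le (hn t (interior_subset h)))
  intro t h
  have hle := hmono (Set.left_mem_Icc.2 ht.le) h h.1
  have h3 := mul_nonneg (Real.exp_pos (k₂ * tk)).le h0
  exact nonneg_of_mul_nonneg_right (h3.trans hle) (Real.exp_pos _)
end

section
/- Let t_k < t_{k+1}, let v : ℝ → ℝ be differentiable on [t_k, t_{k+1}] with constant control: v'(t) = u for all t ∈ [t_k, t_{k+1}], and let v_max ∈ ℝ, k₃ > 0 and s_v ≥ 0. Assume |v(t) − v(t_k)| ≤ s_v for all t in the interval, v(t_k) ≤ v_max, and the event-triggered condition −u + k₃·( v_max − v(t_k) − s_v ) ≥ 0. Then v(t) ≤ v_max for all t ∈ [t_k, t_{k+1}]. -/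
/-- Event-triggered maximum-speed constraint. -/
theorem stmt_11 (tk tk1 : ℝ) (ht : tk < tk1)
    (v : ℝ → ℝ) (u vmax k₃ sv : ℝ) (hk₃ : 0 < k₃) (hsv : 0 ≤ sv)
    (hv : ∀ t ∈ Set.Icc tk tk1, HasDerivAt v u t)
    (hbox : ∀ t ∈ Set.Icc tk tk1, |v t - v tk| ≤ sv)
    (h0 : v tk ≤ vmax)
    (hcond : -u + k₃ * (vmax - v tk - sv) ≥ 0) :
    ∀ t ∈ Set.Icc tk tk1, v t ≤ vmax := by
  intro t htt
  by_cases hu : u ≤ 0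
  · have hanti : AntitoneOn v (Set.Icc tk tk1) := by
      apply antitoneOn_of_deriv_nonpos (convex_Icc tk tk1)
      · intro x hx
        exact (hv x hx).continuousAt.continuousWithinAt
      · intro x hx
        exact (hv x (interior_subset hx)).differentiableAt.differentiableWithinAt
      · intro x hx
        rw [(hv x (interior_subset hx)).deriv]
        exact hu
    exact (hanti (Set.left_mem_Icc.mpr ht.le) htt htt.1).trans h0
  · have h1 : 0 < vmax - v tk - sv := by
      by_contra hc
      nlinarith
    have h2 := (abs_le.mp (hbox t htt)).2
    linarith
end

section
/- Let t_k < t_{k+1}, let v : ℝ → ℝ be differentiable on [t_k, t_{k+1}] with constant control: v'(t) = u for all t ∈ [t_k, t_{k+1}], and let v_min ∈ ℝ, k₄ > 0 and s_v ≥ 0. Assume |v(t) − v(t_k)| ≤ s_v for all t in the interval, v(t_k) ≥ v_min, and the event-triggered condition u + k₄·( v(t_k) − s_v − v_min ) ≥ 0. Then v(t) ≥ v_min for all t ∈ [t_k, t_{k+1}]. -/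
/-- Event-triggered minimum-speed constraint. -/
theorem stmt_12 (tk tk1 : ℝ) (ht : tk < tk1)
    (v : ℝ → ℝ) (u vmin k₄ sv : ℝ) (hk₄ : 0 < k₄) (hsv : 0 ≤ sv)
    (hv : ∀ t ∈ Set.Icc tk tk1, HasDerivAt v u t)
    (hbox : ∀ t ∈ Set.Icc tk tk1, |v t - v tk| ≤ sv)
    (h0 : v tk ≥ vmin)
    (hcond : u + k₄ * (v tk - sv - vmin) ≥ 0) :
    ∀ t ∈ Set.Icc tk tk1, v t ≥ vmin := by
  intro t htm
  have hb := abs_le.mp (hbox t htm)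
  rcases lt_or_ge u 0 with hu | hu
  · have h1 : 0 < k₄ * (v tk - sv - vmin) := by linarith
    have h2 := (mul_pos_iff_of_pos_left hk₄).mp h1
    linarith [hb.1]
  · rcases eq_or_lt_of_le htm.1 with h | h
    · rw [← h]; exact h0
    · obtain ⟨c, hc, he⟩ := exists_hasDerivAt_eq_slope v (fun _ => u) h
        (fun s hs => (hv s ⟨hs.1, hs.2.trans htm.2⟩).continuousAt.continuousWithinAt)
        (fun s hs => hv s ⟨hs.1.le, hs.2.le.trans htm.2⟩)
      have hp : 0 < t - tk := by linarith
      rw [eq_div_iff hp.ne'] at he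
      have := mul_nonneg hu hp.le
      linarith
end
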